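/- Let j ≥ 1 and n ≥ j + 2 be integers, let m = ⌈(n−j)/2⌉, and define p̃(α) = d_{n−j−1}(α) − α·d_{m−1}(α)·d_{n−m−j−1}(α). Then p̃(1/√5) = ((1+φ)^{2m+j−n} + φ^{2m+j−n} − 2φ^{n−j}) / (√5)^{n−j−1}, where φ = (√5 − 1)/2. -/

import Mathlib

/-- `dpoly n α = ∑_{m=0}^{⌊n/2⌋} (-1)^m C(n-m, m) α^(2m)`. -/
noncomputable def dpoly (n : ℕ) (α : ℝ) : ℝ :=
  ∑ m ∈ Finset.range (n / 2 + 1), (-1 : ℝ) ^ m * (Nat.choose (n - m) m : ℝ) * α ^ (2 * m)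

/-- `φ = (√5 - 1)/2`. -/
noncomputable def phi : ℝ := (Real.sqrt 5 - 1) / 2

theorem dpoly_eq (n K : ℕ) (h : n / 2 + 1 ≤ K) (α : ℝ) :
    dpoly n α = ∑ m ∈ Finset.range K, (-1 : ℝ) ^ m * (Nat.choose (n - m) m : ℝ) * α ^ (2 * m) := by
  unfold dpoly
  apply Finset.sum_subset
  · intro x hx
    simp only [Finset.mem_range] at *
    omega
  · intro x _ hx
    simp only [Finset.mem_range] at hx
    rw [Nat.choose_eq_zero_of_lt (by omega)]
    simp

theorem dpoly_rec (n : ℕ) (α : ℝ) :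
    dpoly (n + 2) α = dpoly (n + 1) α - α ^ 2 * dpoly n α := by
  rw [dpoly_eq (n + 2) (n + 1 + 1) (by omega), dpoly_eq (n + 1) (n + 1 + 1) (by omega),
    dpoly_eq n (n + 1) (by omega), Finset.sum_range_succ', Finset.sum_range_succ' _ (n + 1),
    Finset.mul_sum, add_sub_right_comm, ← Finset.sum_sub_distrib]
  congr 1
  · apply Finset.sum_congr rfl
    intro i hi
    simp only [Finset.mem_range] at hi
    have e1 : n + 2 - (i + 1) = (n - i) + 1 := by omega
    have e2 : n + 1 - (i + 1) = n - i := by omega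
    rw [e1, e2, Nat.choose_succ_succ]
    push_cast
    ring

theorem dpoly_closed (n : ℕ) :
    dpoly n (1 / Real.sqrt 5) = ((1 + phi) ^ (n + 1) - phi ^ (n + 1)) / (Real.sqrt 5) ^ n := by
  have h5 : Real.sqrt 5 ^ 2 = 5 := Real.sq_sqrt (by norm_num)
  have hp : Real.sqrt 5 ≠ 0 := by positivity
  have hs : Real.sqrt 5 = 2 * phi + 1 := by unfold phi; ring
  have hq : phi ^ 2 = 1 - phi := by unfold phi; nlinarith
  induction n using Nat.twoStepInduction with
  | zero => simp [dpoly]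
  | one =>
    simp only [dpoly]
    norm_num
    rw [eq_div_iff hp, hs]
    ring
  | more n ih1 ih2 =>
    rw [dpoly_rec, ih1, ih2, div_pow, h5]
    have h1 : Real.sqrt 5 ^ (n + 2) = Real.sqrt 5 ^ n * 5 := by rw [pow_add, h5]
    rw [h1, pow_succ (Real.sqrt 5) n]
    have a1 : (1 + phi) ^ (n + 2 + 1) = (1 + phi) ^ n * (3 + 2 * phi) := by
      rw [add_assoc, pow_add]
      congr 1
      linear_combination (phi + 2) * hq
    have a2 : phi ^ (n + 2 + 1) = phi ^ n * (2 * phi - 1) := by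
      rw [add_assoc, pow_add]
      congr 1
      linear_combination (phi - 1) * hq
    have b1 : (1 + phi) ^ (n + 1 + 1) = (1 + phi) ^ n * (2 + phi) := by
      rw [add_assoc, pow_add]
      congr 1
      linear_combination hq
    have b2 : phi ^ (n + 1 + 1) = phi ^ n * (1 - phi) := by
      rw [add_assoc, pow_add]
      congr 1
    rw [a1, a2, b1, b2, pow_succ (1 + phi) n, pow_succ phi n]
    field_simp
    rw [hs]
    generalize (1 + phi) ^ n = A
    generalize phi ^ n = B
    linear_combination (-6 * A + 6 * B) * hq

theorem stmt18 (j n : ℕ) (hj : 1 ≤ j) (hn : j + 2 ≤ n)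
    (m : ℕ) (hm : m = (n - j + 1) / 2) :
    dpoly (n - j - 1) (1 / Real.sqrt 5)
        - (1 / Real.sqrt 5) * dpoly (m - 1) (1 / Real.sqrt 5)
          * dpoly (n - m - j - 1) (1 / Real.sqrt 5)
      = ((1 + phi) ^ (2 * m + j - n) + phi ^ (2 * m + j - n) - 2 * phi ^ (n - j))
          / (Real.sqrt 5) ^ (n - j - 1) := by
  have hp : Real.sqrt 5 ≠ 0 := by positivity
  have h5 : Real.sqrt 5 ^ 2 = 5 := Real.sq_sqrt (by norm_num)
  have hq : (1 + phi) * phi = 1 := by unfold phi; nlinarith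
  obtain ⟨k, e, hk, rfl, he⟩ : ∃ k e, n = j + (2 * k + 2 + e) ∧ m = k + 1 + e ∧ e ≤ 1 :=
    ⟨n - j - m - 1, 2 * m + j - n, by omega, by omega, by omega⟩
  subst hk
  rw [show j + (2 * k + 2 + e) - j - 1 = 2 * k + 1 + e by omega,
    show k + 1 + e - 1 = k + e by omega,
    show j + (2 * k + 2 + e) - (k + 1 + e) - j - 1 = k by omega,
    show 2 * (k + 1 + e) + j - (j + (2 * k + 2 + e)) = e by omega,
    show j + (2 * k + 2 + e) - j = 2 * k + 2 + e by omega,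
    dpoly_closed, dpoly_closed, dpoly_closed]
  have hk : (1 + phi) ^ (k + 1) * phi ^ (k + 1) = 1 := by rw [← mul_pow, hq, one_pow]
  rw [show Real.sqrt 5 ^ (2 * k + 1 + e) = Real.sqrt 5 * Real.sqrt 5 ^ (k + e) * Real.sqrt 5 ^ k by
    ring]
  field_simp
  rw [show (1 + phi) ^ (2 * k + 1 + e + 1) = (1 + phi) ^ (k + 1) * (1 + phi) ^ (k + 1) * (1 + phi) ^ e by ring,
    show phi ^ (2 * k + 1 + e + 1) = phi ^ (k + 1) * phi ^ (k + 1) * phi ^ e by ring,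
    show phi ^ (2 * k + 2 + e) = phi ^ (k + 1) * phi ^ (k + 1) * phi ^ e by ring,
    show (1 + phi) ^ (k + e + 1) = (1 + phi) ^ (k + 1) * (1 + phi) ^ e by ring,
    show phi ^ (k + e + 1) = phi ^ (k + 1) * phi ^ e by ring]
  linear_combination ((1 + phi) ^ e + phi ^ e) * hk
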